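/- Let n ≥ 0, let i_1, i_2 ∈ {0,1}, and let α be a word over {0,1} of length 2^n. If i_1^{(n)} i_2^{(n)} α is a factor of ω, or if α i_1^{(n)} i_2^{(n)} is a factor of ω, then α = 0^{(n)} or α = 1^{(n)}. -/

import Mathlib

/-- One-sided Thue–Morse sequence: parity of the binary digit sum. -/
def tm (n : ℕ) : ℕ := (Nat.digits 2 n).sum % 2

/-- Two-sided Thue–Morse sequence `ω : ℤ → {0,1}`. -/
def tmZ (n : ℤ) : ℕ := if 0 ≤ n then tm n.toNat else tm (-n - 1).toNat

/-- The block `ω_[m, m+k-1]` of the two-sided Thue–Morse sequence. -/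
def tmBlock (m : ℤ) (k : ℕ) : List ℕ := (List.range k).map fun j => tmZ (m + j)

/-- A (nonempty) word is a factor of the two-sided Thue–Morse sequence. -/
def IsFactor (α : List ℕ) : Prop := α ≠ [] ∧ ∃ m : ℤ, α = tmBlock m α.length

/-- The words `i⁽ⁿ⁾`: `blk i 0 = [i]`, `blk i (n+1) = blk i n ++ blk (1-i) n`. -/
def blk : ℕ → ℕ → List ℕ
  | i, 0 => [i]
  | i, n + 1 => blk i n ++ blk (1 - i) n

/-!
Let `θ` be the substitution `a ↦ a f(a)`, so that `i⁽ⁿ⁾ = θⁿ(i)` for `f(a) = 1 - a`. Although `ω` is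
not fixed by `θ`, it is fixed by `θ²` and hence lies in the image of every power of `θ`. If `f` has
no fixed points, then `θ(u)` with `|u| ≥ 2` occurs only at even positions of a sequence `θ²(z)`.
Desubstituting `n` times, `θⁿ(u)` occurs only at multiples of `2ⁿ` in `θⁿ⁺¹(z)`, and the words of
length `2ⁿ` at those positions are the blocks `θⁿ(a)`.
-/

section Substitution

variable {A : Type*} {f : A → A} {x : ℤ → A}

/-- The substitution `a ↦ a f(a)` on finite words. Its iterates generate generalized Thue–Morse
blocks: `blk i n` is the `n`-th iterate on the word `[i]` for `f a = 1 - a`. -/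
def wordSubst (f : A → A) (u : List A) : List A := u.flatMap fun a => [a, f a]

/-- The substitution `a ↦ a f(a)` on two-sided sequences, aligned so that the image of the letter
at position `k` occupies the positions `2k` and `2k + 1`. -/
def seqSubst (f : A → A) (x : ℤ → A) (k : ℤ) : A := if Even k then x (k / 2) else f (x (k / 2))

/-- The word `u` occurs in the two-sided sequence `x` with its first letter at position `m`.
The empty word occurs everywhere. -/
def OccursAt (x : ℤ → A) : ℤ → List A → Prop
  | _, [] => True
  | m, a :: u => x m = a ∧ OccursAt x (m + 1) u

@[simp]
lemma wordSubst_nil : wordSubst f [] = [] := rfl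

@[simp]
lemma wordSubst_cons (a : A) (u : List A) : wordSubst f (a :: u) = a :: f a :: wordSubst f u := rfl

lemma wordSubst_append (u v : List A) : wordSubst f (u ++ v) = wordSubst f u ++ wordSubst f v :=
  List.flatMap_append

lemma length_wordSubst (u : List A) : (wordSubst f u).length = 2 * u.length := by
  induction u with
  | nil => rfl
  | cons a u ih => simp only [wordSubst_cons, List.length_cons, ih]; ring

lemma iterate_wordSubst_append (n : ℕ) (u v : List A) :
    (wordSubst f)^[n] (u ++ v) = (wordSubst f)^[n] u ++ (wordSubst f)^[n] v := by
  induction n with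
  | zero => rfl
  | succ n ih => simp only [Function.iterate_succ_apply', ih, wordSubst_append]

lemma length_iterate_wordSubst (n : ℕ) (u : List A) :
    ((wordSubst f)^[n] u).length = 2 ^ n * u.length := by
  induction n with
  | zero => simp
  | succ n ih => rw [Function.iterate_succ_apply', length_wordSubst, ih]; ring

@[simp]
lemma seqSubst_two_mul (k : ℤ) : seqSubst f x (2 * k) = x k := by
  simp [seqSubst]

@[simp]
lemma seqSubst_two_mul_add_one (k : ℤ) : seqSubst f x (2 * k + 1) = f (x k) := by
  rw [seqSubst, if_neg (by simp), show (2 * k + 1) / 2 = k by omega]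

lemma seqSubst_eq_iff {y : ℤ → A} :
    seqSubst f x = y ↔ ∀ k, y (2 * k) = x k ∧ y (2 * k + 1) = f (x k) := by
  refine ⟨by rintro rfl; simp, fun h => funext fun m => ?_⟩
  obtain ⟨k, rfl | rfl⟩ := Int.even_or_odd' m <;> simp [h k]

lemma iterate_seqSubst_two_pow_mul (n : ℕ) (k : ℤ) : (seqSubst f)^[n] x (2 ^ n * k) = x k := by
  induction n with
  | zero => simp
  | succ n ih => rw [Function.iterate_succ_apply', pow_succ', mul_assoc, seqSubst_two_mul, ih]

lemma occursAt_append {m : ℤ} {u v : List A} :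
    OccursAt x m (u ++ v) ↔ OccursAt x m u ∧ OccursAt x (m + u.length) v := by
  induction u generalizing m with
  | nil => simp [OccursAt]
  | cons a u ih => simp [OccursAt, ih, and_assoc, add_assoc, add_comm (1 : ℤ)]

lemma OccursAt.eq_of_length_eq {m : ℤ} {u v : List A} (hu : OccursAt x m u) (hv : OccursAt x m v)
    (h : u.length = v.length) : u = v := by
  induction u generalizing m v with
  | nil => exact (List.length_eq_zero_iff.mp h.symm).symm
  | cons a u ih =>
    obtain - | ⟨b, v⟩ := v
    · simp at h
    · rw [← hu.1, ← hv.1, ih hu.2 hv.2 (Nat.succ.inj h)]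

lemma occursAt_seqSubst_two_mul {k : ℤ} {u : List A} :
    OccursAt (seqSubst f x) (2 * k) (wordSubst f u) ↔ OccursAt x k u := by
  induction u generalizing k with
  | nil => rfl
  | cons a u ih =>
    have next : 2 * k + 1 + 1 = 2 * (k + 1) := by ring
    simp only [wordSubst_cons, OccursAt, seqSubst_two_mul, seqSubst_two_mul_add_one, next, ih]
    exact ⟨fun h => ⟨h.1, h.2.2⟩, fun h => ⟨h.1, congrArg f h.1, h.2⟩⟩

lemma occursAt_iterate_seqSubst_two_pow_mul {n : ℕ} {k : ℤ} {u : List A} :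
    OccursAt ((seqSubst f)^[n] x) (2 ^ n * k) ((wordSubst f)^[n] u) ↔ OccursAt x k u := by
  induction n with
  | zero => simp
  | succ n ih =>
    rw [Function.iterate_succ_apply', Function.iterate_succ_apply', pow_succ', mul_assoc,
      occursAt_seqSubst_two_mul, ih]

/-- At an odd position the letters of `a f(a) b f(b)` straddle the images of three consecutive
letters of `θ(x)`. Two neighbours among these come from one letter of `x`, which makes `a` or `b`
a fixed point of `f`. -/
lemma OccursAt.even_of_wordSubst (hf : ∀ a, f a ≠ a) {m : ℤ} {u : List A} (hu : 2 ≤ u.length)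
    (h : OccursAt (seqSubst f (seqSubst f x)) m (wordSubst f u)) : Even m := by
  obtain - | ⟨a, - | ⟨b, u⟩⟩ := u
  · simp at hu
  · simp at hu
  by_contra hm
  obtain ⟨k, rfl⟩ := Int.not_even_iff_odd.mp hm
  have second : 2 * k + 1 + 1 = 2 * (k + 1) := by ring
  have fourth : 2 * (k + 1) + 1 + 1 = 2 * (k + 2) := by ring
  simp only [wordSubst_cons, OccursAt, second, fourth, seqSubst_two_mul,
    seqSubst_two_mul_add_one] at h
  obtain ⟨ha, hfa, hb, hfb, -⟩ := h
  obtain ⟨l, rfl | rfl⟩ := Int.even_or_odd' k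
  · rw [seqSubst_two_mul] at ha
    rw [seqSubst_two_mul_add_one, ha] at hfa
    exact hf a hfa.symm
  · rw [show 2 * l + 1 + 1 = 2 * (l + 1) by ring, seqSubst_two_mul] at hb
    rw [show 2 * l + 1 + 2 = 2 * (l + 1) + 1 by ring, seqSubst_two_mul_add_one, hb] at hfb
    exact hf b hfb.symm

lemma OccursAt.two_pow_dvd_of_iterate_wordSubst (hf : ∀ a, f a ≠ a) {n : ℕ} {m : ℤ} {u : List A}
    (hu : 2 ≤ u.length) (h : OccursAt ((seqSubst f)^[n + 1] x) m ((wordSubst f)^[n] u)) :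
    2 ^ n ∣ m := by
  induction n generalizing m with
  | zero => simp
  | succ n ih =>
    rw [Function.iterate_succ_apply' _ (n + 1), Function.iterate_succ_apply' _ n u] at h
    have two_le_length : 2 ≤ ((wordSubst f)^[n] u).length := by
      rw [length_iterate_wordSubst]
      exact hu.trans (Nat.le_mul_of_pos_left _ (by positivity))
    have m_even : Even m := by
      rw [Function.iterate_succ_apply'] at h
      exact h.even_of_wordSubst hf two_le_length
    obtain ⟨k, rfl⟩ := m_even.two_dvd
    rw [pow_succ']
    exact mul_dvd_mul_left 2 (ih (occursAt_seqSubst_two_mul.mp h))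

lemma OccursAt.eq_iterate_wordSubst_of_two_pow_dvd {n : ℕ} {m : ℤ} {u : List A}
    (h : OccursAt ((seqSubst f)^[n] x) m u) (hu : u.length = 2 ^ n) (hm : 2 ^ n ∣ m) :
    u = (wordSubst f)^[n] [(seqSubst f)^[n] x m] := by
  obtain ⟨k, rfl⟩ := hm
  rw [iterate_seqSubst_two_pow_mul]
  have aligned : OccursAt ((seqSubst f)^[n] x) (2 ^ n * k) ((wordSubst f)^[n] [x k]) :=
    occursAt_iterate_seqSubst_two_pow_mul.mpr ⟨rfl, trivial⟩
  exact h.eq_of_length_eq aligned (by simp [hu, length_iterate_wordSubst])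

theorem blk_follower_general (hf : ∀ a, f a ≠ a) {n : ℕ}
    (hx : x ∈ Set.range (seqSubst f)^[n + 1]) {u α : List A} (hu : 2 ≤ u.length)
    (hα : α.length = 2 ^ n)
    (h : (∃ m, OccursAt x m ((wordSubst f)^[n] u ++ α)) ∨
      ∃ m, OccursAt x m (α ++ (wordSubst f)^[n] u)) :
    ∃ m, α = (wordSubst f)^[n] [x m] := by
  obtain ⟨y, rfl⟩ := hx
  suffices ∃ m, 2 ^ n ∣ m ∧ OccursAt ((seqSubst f)^[n + 1] y) m α by
    obtain ⟨m, m_dvd, α_occurs⟩ := this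
    rw [Function.iterate_succ_apply] at α_occurs ⊢
    exact ⟨m, α_occurs.eq_iterate_wordSubst_of_two_pow_dvd hα m_dvd⟩
  obtain ⟨m, h⟩ | ⟨m, h⟩ := h <;> rw [occursAt_append] at h
  · refine ⟨_, dvd_add (h.1.two_pow_dvd_of_iterate_wordSubst hf hu) ?_, h.2⟩
    simp [length_iterate_wordSubst]
  · refine ⟨m, (dvd_add_left ?_).mp (h.2.two_pow_dvd_of_iterate_wordSubst hf hu), h.1⟩
    simp [hα]

end Substitution

/-- The two-sided sequence obtained from `tmZ` by complementing the letters at negative positions.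
The substitution `a ↦ a (1 - a)` exchanges it with `tmZ`. -/
def tmZFlip (n : ℤ) : ℕ := if 0 ≤ n then tm n.toNat else 1 - tm (-n - 1).toNat

lemma tm_le_one (n : ℕ) : tm n ≤ 1 := Nat.le_of_lt_succ (Nat.mod_lt _ two_pos)

lemma tm_two_mul (n : ℕ) : tm (2 * n) = tm n := by
  obtain rfl | hn := n.eq_zero_or_pos
  · rfl
  · simp [tm, Nat.digits_def' one_lt_two (Nat.mul_pos two_pos hn)]

lemma tm_two_mul_add_one (n : ℕ) : tm (2 * n + 1) = 1 - tm n := by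
  rw [tm, tm, add_comm, Nat.digits_add 2 one_lt_two 1 n one_lt_two (.inl one_ne_zero),
    List.sum_cons]
  omega

lemma tmZ_natCast (n : ℕ) : tmZ n = tm n := by
  simp [tmZ]

lemma tmZ_negSucc (n : ℕ) : tmZ (Int.negSucc n) = tm n := by
  simp [tmZ, Int.neg_negSucc]

lemma tmZFlip_natCast (n : ℕ) : tmZFlip n = tm n := by
  simp [tmZFlip]

lemma tmZFlip_negSucc (n : ℕ) : tmZFlip (Int.negSucc n) = 1 - tm n := by
  simp [tmZFlip, Int.neg_negSucc]

lemma tmZ_eq_zero_or_one (m : ℤ) : tmZ m = 0 ∨ tmZ m = 1 := by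
  rw [← Nat.le_one_iff_eq_zero_or_eq_one, tmZ]
  split <;> exact tm_le_one _

lemma two_mul_negSucc (n : ℕ) : 2 * Int.negSucc n = Int.negSucc (2 * n + 1) := by
  omega

lemma two_mul_negSucc_add_one (n : ℕ) : 2 * Int.negSucc n + 1 = Int.negSucc (2 * n) := by
  omega

lemma seqSubst_tmZFlip : seqSubst (1 - ·) tmZFlip = tmZ := by
  refine seqSubst_eq_iff.mpr fun k => ?_
  obtain n | n := k
  · rw [Int.ofNat_eq_natCast, tmZFlip_natCast, ← tm_two_mul_add_one, ← tm_two_mul,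
      ← tmZ_natCast, ← tmZ_natCast]
    exact ⟨by norm_cast, by norm_cast⟩
  · rw [two_mul_negSucc_add_one, two_mul_negSucc, tmZ_negSucc, tmZ_negSucc, tmZFlip_negSucc,
      tm_two_mul, tm_two_mul_add_one, Nat.sub_sub_self (tm_le_one n)]
    exact ⟨rfl, rfl⟩

lemma seqSubst_tmZ : seqSubst (1 - ·) tmZ = tmZFlip := by
  refine seqSubst_eq_iff.mpr fun k => ?_
  obtain n | n := k
  · rw [Int.ofNat_eq_natCast, tmZ_natCast, ← tm_two_mul_add_one, ← tm_two_mul,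
      ← tmZFlip_natCast, ← tmZFlip_natCast]
    exact ⟨by norm_cast, by norm_cast⟩
  · rw [two_mul_negSucc_add_one, two_mul_negSucc, tmZFlip_negSucc, tmZFlip_negSucc, tmZ_negSucc,
      tm_two_mul, tm_two_mul_add_one, Nat.sub_sub_self (tm_le_one n)]
    exact ⟨rfl, rfl⟩

lemma tmZ_mem_range_iterate_seqSubst (n : ℕ) : tmZ ∈ Set.range (seqSubst (1 - ·))^[n] := by
  have fixed : Function.IsFixedPt (seqSubst (1 - ·))^[2] tmZ := by
    rw [Function.IsFixedPt, Function.iterate_succ_apply, Function.iterate_one, seqSubst_tmZ,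
      seqSubst_tmZFlip]
  refine ⟨(seqSubst (1 - ·))^[n] tmZ, ?_⟩
  rw [← Function.iterate_add_apply, ← two_mul, Function.iterate_mul]
  exact fixed.iterate n

lemma blk_eq_iterate_wordSubst (i n : ℕ) : blk i n = (wordSubst (1 - ·))^[n] [i] := by
  induction n generalizing i with
  | zero => rfl
  | succ n ih =>
    rw [blk, ih, ih, ← iterate_wordSubst_append, Function.iterate_succ_apply]
    rfl

/-- In `tmBlock` the variable `j` is an integer, so that `List.range k` is coerced to a list of
integers through the list monad. -/
lemma tmBlock_eq_map (m : ℤ) (k : ℕ) :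
    tmBlock m k = (List.range k).map fun j : ℕ => tmZ (m + j) := by
  simp [tmBlock, List.map_eq_flatMap, List.flatMap_assoc]

lemma tmBlock_succ (m : ℤ) (k : ℕ) : tmBlock m (k + 1) = tmZ m :: tmBlock (m + 1) k := by
  simp [tmBlock_eq_map, List.range_succ_eq_map, add_assoc, add_comm (1 : ℤ)]

lemma occursAt_tmBlock (m : ℤ) (k : ℕ) : OccursAt tmZ m (tmBlock m k) := by
  induction k generalizing m with
  | zero => trivial
  | succ k ih => rw [tmBlock_succ]; exact ⟨rfl, ih (m + 1)⟩

lemma IsFactor.exists_occursAt {u : List ℕ} (h : IsFactor u) : ∃ m, OccursAt tmZ m u := by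
  obtain ⟨-, m, hu⟩ := h
  exact ⟨m, hu ▸ occursAt_tmBlock m u.length⟩

/-- If `α` has length `2ⁿ` and `i₁⁽ⁿ⁾ i₂⁽ⁿ⁾ α` (or `α i₁⁽ⁿ⁾ i₂⁽ⁿ⁾`) is a factor of the
two-sided Thue–Morse sequence, then `α = 0⁽ⁿ⁾` or `α = 1⁽ⁿ⁾`. -/
theorem blk_follower (n : ℕ) (i₁ i₂ : ℕ) (hi₁ : i₁ = 0 ∨ i₁ = 1) (hi₂ : i₂ = 0 ∨ i₂ = 1)
    (α : List ℕ) (hα : α.length = 2 ^ n)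
    (h : IsFactor (blk i₁ n ++ blk i₂ n ++ α) ∨ IsFactor (α ++ blk i₁ n ++ blk i₂ n)) :
    α = blk 0 n ∨ α = blk 1 n := by
  have blocks : blk i₁ n ++ blk i₂ n = (wordSubst (1 - ·))^[n] [i₁, i₂] := by
    rw [blk_eq_iterate_wordSubst, blk_eq_iterate_wordSubst, ← iterate_wordSubst_append]
    rfl
  rw [List.append_assoc α, blocks] at h
  have complement_ne : ∀ a : ℕ, 1 - a ≠ a := by grind
  obtain ⟨m, rfl⟩ := blk_follower_general complement_ne (tmZ_mem_range_iterate_seqSubst (n + 1))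
    (u := [i₁, i₂]) le_rfl hα (h.imp IsFactor.exists_occursAt IsFactor.exists_occursAt)
  rw [← blk_eq_iterate_wordSubst]
  exact (tmZ_eq_zero_or_one m).imp (congrArg (blk · n)) (congrArg (blk · n))
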